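/- arXiv:1512.08522 — 5 statements merged into one kernel-verified Lean document; each statement's English description precedes it below -/
import Mathlib

section
/- Let (E, ρ, ⟨·,·⟩_E, [·,·]_E) be a Courant algebroid and ∇ a Courant algebroid connection on E. Define the torsion operator T : Γ(E) × Γ(E) → Γ(E) by T(e,e') = ∇_e e' − ∇_{e'} e − [e,e']_E + ⟨∇_{e_λ} e, e'⟩_E · g_E^{-1}(e^λ), where (e_λ) is any local frame of E with dual frame (e^λ) (summation over λ) and g_E : E → E* is the isomorphism induced by ⟨·,·⟩_E. Then T is C^∞(M)-bilinear, and the map T_G(e,e',e'') := ⟨T(e,e'), e''⟩_E is completely skew-symmetric, i.e. T_G is a 3-form on E. -/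
/-!
An algebraic model of Courant algebroids over a smooth manifold `M`:
`M` is modelled by its commutative `ℝ`-algebra of smooth functions `C = C^∞(M)`,
vector fields are `ℝ`-linear derivations of `C`, and the module of sections `Γ(E)`
is modelled by a `C`-module `E`.  Local frames are encoded by finite families of
sections together with duality (w.r.t. the pairing) and spanning conditions.
-/

open scoped BigOperators

noncomputable section

/-- Vector fields on `M`, modelled as `ℝ`-linear derivations of `C = C^∞(M)`. -/
abbrev VectorField (C : Type) [CommRing C] [Algebra ℝ C] := Derivation ℝ C C

/-- A Courant algebroid `(E, ρ, ⟨·,·⟩_E, [·,·]_E)` over `M`. -/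
structure CourantAlgebroid (C : Type) [CommRing C] [Algebra ℝ C]
    (E : Type) [AddCommGroup E] [Module C E] [Module ℝ E] [IsScalarTower ℝ C E] where
  /-- The anchor `ρ ∈ Hom(E, TM)`. -/
  anchor : E →ₗ[C] VectorField C
  /-- The bracket `[·,·]_E` on sections. -/
  bracket : E → E → E
  add_left : ∀ e₁ e₂ e', bracket (e₁ + e₂) e' = bracket e₁ e' + bracket e₂ e'
  smul_real_left : ∀ (r : ℝ) (e e' : E), bracket (r • e) e' = r • bracket e e'
  add_right : ∀ e e₁ e₂, bracket e (e₁ + e₂) = bracket e e₁ + bracket e e₂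
  smul_real_right : ∀ (r : ℝ) (e e' : E), bracket e (r • e') = r • bracket e e'
  /-- The Leibniz rule `[e, f·e']_E = f·[e,e']_E + (ρ(e).f)·e'`. -/
  leibniz_rule : ∀ (f : C) (e e' : E),
    bracket e (f • e') = f • bracket e e' + anchor e f • e'
  /-- The Leibniz identity `[e,[e',e'']] = [[e,e'],e''] + [e',[e,e'']]`. -/
  leibniz_identity : ∀ e e' e'',
    bracket e (bracket e' e'') = bracket (bracket e e') e'' + bracket e' (bracket e e'')
  /-- The nondegenerate symmetric fiberwise pairing `⟨·,·⟩_E`. -/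
  pairing : E → E → C
  pairing_symm : ∀ e e', pairing e e' = pairing e' e
  pairing_add : ∀ e₁ e₂ e', pairing (e₁ + e₂) e' = pairing e₁ e' + pairing e₂ e'
  pairing_smul : ∀ (f : C) (e e' : E), pairing (f • e) e' = f * pairing e e'
  pairing_nondeg : ∀ e, (∀ e', pairing e e' = 0) → e = 0
  /-- Axiom (iii): `⟨[e,e]_E, e'⟩_E = (1/2)·ρ(e').⟨e,e⟩_E`. -/
  ax_symmetric : ∀ e e',
    pairing (bracket e e) e' = (2:ℝ)⁻¹ • anchor e' (pairing e e)
  /-- Axiom (iv): `ρ(e).⟨e',e''⟩_E = ⟨[e,e']_E,e''⟩_E + ⟨e',[e,e'']_E⟩_E`. -/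
  ax_invariance : ∀ e e' e'',
    anchor e (pairing e' e'') = pairing (bracket e e') e'' + pairing e' (bracket e e'')

variable {C : Type} [CommRing C] [Algebra ℝ C]
variable {E : Type} [AddCommGroup E] [Module C E] [Module ℝ E] [IsScalarTower ℝ C E]

/-- A Courant algebroid connection `∇` on `E`. -/
structure CourantConnection (A : CourantAlgebroid C E) where
  cd : E → E → E
  add_left : ∀ e₁ e₂ e', cd (e₁ + e₂) e' = cd e₁ e' + cd e₂ e'
  smul_left : ∀ (f : C) (e e' : E), cd (f • e) e' = f • cd e e'
  add_right : ∀ e e₁ e₂, cd e (e₁ + e₂) = cd e e₁ + cd e e₂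
  smul_right : ∀ (f : C) (e e' : E), cd e (f • e') = f • cd e e' + A.anchor e f • e'
  pairing_compat : ∀ e e' e'',
    A.anchor e (A.pairing e' e'') = A.pairing (cd e e') e'' + A.pairing e' (cd e e'')

/-- A local frame `(e_λ)` of `E` together with the metric-dualized dual frame
`g_E⁻¹(e^λ)`: `⟨g_E⁻¹(e^λ), e_μ⟩_E = δ^λ_μ` and every section expands in the frame. -/
structure CourantFrame (A : CourantAlgebroid C E) (ι : Type) [Fintype ι] [DecidableEq ι] where
  vec : ι → E
  dual : ι → E
  dual_pair : ∀ i j, A.pairing (dual i) (vec j) = if i = j then (1 : C) else 0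
  total : ∀ e : E, ∑ i, A.pairing (dual i) e • vec i = e

variable {ι : Type} [Fintype ι] [DecidableEq ι]

/-- The torsion operator
`T(e,e') = ∇_e e' − ∇_{e'} e − [e,e']_E + ⟨∇_{e_λ} e, e'⟩_E · g_E⁻¹(e^λ)`. -/
def torsionOp (A : CourantAlgebroid C E) (nab : CourantConnection A)
    (F : CourantFrame A ι) (e e' : E) : E :=
  nab.cd e e' - nab.cd e' e - A.bracket e e'
    + ∑ i, A.pairing (nab.cd (F.vec i) e) e' • F.dual i

/-- The Gualtieri torsion `T_G(e,e',e'') = ⟨T(e,e'), e''⟩_E`. -/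
def torsionG (A : CourantAlgebroid C E) (nab : CourantConnection A)
    (F : CourantFrame A ι) (e e' e'' : E) : C :=
  A.pairing (torsionOp A nab F e e') e''

theorem cg_add_right (A : CourantAlgebroid C E) (x y z : E) :
    A.pairing x (y + z) = A.pairing x y + A.pairing x z := by
  rw [A.pairing_symm, A.pairing_add, A.pairing_symm y, A.pairing_symm z]

theorem cg_smul_right (A : CourantAlgebroid C E) (f : C) (x y : E) :
    A.pairing x (f • y) = f * A.pairing x y := by
  rw [A.pairing_symm, A.pairing_smul, A.pairing_symm y]

theorem cg_neg (A : CourantAlgebroid C E) (x y : E) :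
    A.pairing (-x) y = - A.pairing x y := by
  have h := A.pairing_smul (-1) x y
  simpa using h

theorem cg_sub (A : CourantAlgebroid C E) (x y z : E) :
    A.pairing (x - y) z = A.pairing x z - A.pairing y z := by
  rw [sub_eq_add_neg, A.pairing_add, cg_neg, sub_eq_add_neg]

/-- The additive map `x ↦ ⟨x, z⟩`. -/
def cgHom (A : CourantAlgebroid C E) (z : E) : E →+ C :=
  AddMonoidHom.mk' (fun x => A.pairing x z) (fun x y => A.pairing_add x y z)

theorem cg_sum (A : CourantAlgebroid C E) (v : ι → E) (z : E) :
    A.pairing (∑ i, v i) z = ∑ i, A.pairing (v i) z :=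
  map_sum (cgHom A z) v Finset.univ

theorem cg_ext (A : CourantAlgebroid C E) (x y : E)
    (h : ∀ z, A.pairing x z = A.pairing y z) : x = y := by
  rw [← sub_eq_zero]
  apply A.pairing_nondeg
  intro z
  rw [cg_sub, h, sub_self]

theorem cg_frame (A : CourantAlgebroid C E) (nab : CourantConnection A)
    (F : CourantFrame A ι) (e z : E) :
    nab.cd z e = ∑ i, A.pairing (F.dual i) z • nab.cd (F.vec i) e := by
  conv_lhs => rw [← F.total z]
  let g : E →+ E := AddMonoidHom.mk' (fun x => nab.cd x e) (fun x y => nab.add_left x y e)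
  have h := map_sum g (fun i => A.pairing (F.dual i) z • F.vec i) Finset.univ
  refine h.trans (Finset.sum_congr rfl fun i _ => ?_)
  exact nab.smul_left _ _ _

theorem cg_G (A : CourantAlgebroid C E) (nab : CourantConnection A)
    (F : CourantFrame A ι) (x y z : E) :
    torsionG A nab F x y z = A.pairing (nab.cd x y) z - A.pairing (nab.cd y x) z
      - A.pairing (A.bracket x y) z + A.pairing (nab.cd z x) y := by
  unfold torsionG torsionOp
  rw [A.pairing_add, cg_sub, cg_sub, cg_sum, cg_frame A nab F x z, cg_sum]
  congr 1
  refine Finset.sum_congr rfl fun i _ => ?_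
  rw [A.pairing_smul, A.pairing_smul, mul_comm]

theorem cg_polar (A : CourantAlgebroid C E) (x y z : E) :
    A.pairing (A.bracket x y) z + A.pairing (A.bracket y x) z
      = A.anchor z (A.pairing x y) := by
  have h := A.ax_symmetric (x + y) z
  have hx := A.ax_symmetric x z
  have hy := A.ax_symmetric y z
  simp only [A.add_left, A.add_right, A.pairing_add, cg_add_right, map_add, smul_add] at h
  rw [hx, hy, A.pairing_symm y x] at h
  have h2 : (2:ℝ)⁻¹ • A.anchor z (A.pairing x y) + (2:ℝ)⁻¹ • A.anchor z (A.pairing x y)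
      = A.anchor z (A.pairing x y) := by
    rw [← add_smul]; norm_num
  linear_combination h + h2

theorem cg_skew1 (A : CourantAlgebroid C E) (nab : CourantConnection A)
    (F : CourantFrame A ι) (x y z : E) :
    torsionG A nab F x y z = - torsionG A nab F y x z := by
  rw [cg_G, cg_G]
  have h1 := cg_polar A x y z
  have h2 := nab.pairing_compat z x y
  rw [A.pairing_symm x (nab.cd z y)] at h2
  linear_combination -h2 - h1

theorem cg_skew2 (A : CourantAlgebroid C E) (nab : CourantConnection A)
    (F : CourantFrame A ι) (x y z : E) :
    torsionG A nab F x y z = - torsionG A nab F x z y := by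
  rw [cg_G, cg_G]
  have h1 := A.ax_invariance x y z
  have h2 := nab.pairing_compat x y z
  rw [A.pairing_symm y (nab.cd x z)] at h2
  rw [A.pairing_symm y (A.bracket x z)] at h1
  linear_combination h1 - h2

theorem cg_cyc (A : CourantAlgebroid C E) (nab : CourantConnection A)
    (F : CourantFrame A ι) (x y z : E) :
    torsionG A nab F x y z = torsionG A nab F y z x := by
  rw [cg_skew1, cg_skew2, neg_neg]

/-- The torsion operator of a Courant algebroid connection is
`C^∞(M)`-bilinear, and `T_G(e,e',e'') := ⟨T(e,e'), e''⟩_E` is completely skew-symmetric,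
i.e. `T_G` is a 3-form on `E`. -/
theorem torsion_is_tensorial_and_gualtieri_torsion_is_threeform
    (C : Type) [CommRing C] [Algebra ℝ C]
    (E : Type) [AddCommGroup E] [Module C E] [Module ℝ E] [IsScalarTower ℝ C E]
    (A : CourantAlgebroid C E) (nab : CourantConnection A)
    (ι : Type) [Fintype ι] [DecidableEq ι] (F : CourantFrame A ι) :
    -- `T` is C^∞(M)-bilinear:
    ((∀ e₁ e₂ e', torsionOp A nab F (e₁ + e₂) e'
        = torsionOp A nab F e₁ e' + torsionOp A nab F e₂ e') ∧
     (∀ (f : C) (e e' : E), torsionOp A nab F (f • e) e' = f • torsionOp A nab F e e') ∧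
     (∀ e e₁ e₂, torsionOp A nab F e (e₁ + e₂)
        = torsionOp A nab F e e₁ + torsionOp A nab F e e₂) ∧
     (∀ (f : C) (e e' : E), torsionOp A nab F e (f • e') = f • torsionOp A nab F e e')) ∧
    -- `T_G` is completely skew-symmetric:
    ((∀ e e' e'', torsionG A nab F e e' e'' = - torsionG A nab F e' e e'') ∧
     (∀ e e' e'', torsionG A nab F e e' e'' = - torsionG A nab F e e'' e')) := by
  refine ⟨⟨?_, ?_, ?_, ?_⟩, cg_skew1 A nab F, cg_skew2 A nab F⟩
  · intro a b y
    refine cg_ext A _ _ fun z => ?_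
    rw [A.pairing_add]
    change torsionG A nab F (a + b) y z = torsionG A nab F a y z + torsionG A nab F b y z
    rw [cg_cyc A nab F (a + b), cg_cyc A nab F a, cg_cyc A nab F b]
    exact cg_add_right A _ _ _
  · intro f a y
    refine cg_ext A _ _ fun z => ?_
    rw [A.pairing_smul]
    change torsionG A nab F (f • a) y z = f * torsionG A nab F a y z
    rw [cg_cyc A nab F (f • a), cg_cyc A nab F a]
    exact cg_smul_right A _ _ _
  · intro x a b
    refine cg_ext A _ _ fun z => ?_
    rw [A.pairing_add]
    change torsionG A nab F x (a + b) z = torsionG A nab F x a z + torsionG A nab F x b z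
    rw [← cg_cyc A nab F z x (a + b), ← cg_cyc A nab F z x a, ← cg_cyc A nab F z x b]
    exact cg_add_right A _ _ _
  · intro f x a
    refine cg_ext A _ _ fun z => ?_
    rw [A.pairing_smul]
    change torsionG A nab F x (f • a) z = f * torsionG A nab F x a z
    rw [← cg_cyc A nab F z x (f • a), ← cg_cyc A nab F z x a]
    exact cg_smul_right A _ _ _
end
end

section
/- Let V be a finite-dimensional real vector space, c a negative definite symmetric bilinear form on V, and 𝔥 a positive definite symmetric bilinear form on V. If 𝔥 c^{−1} 𝔥 = c, where 𝔥, c : V → V* are the induced linear maps and c^{−1} : V* → V their inverses, then 𝔥 = −c. -/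
/-!
STATEMENT 8: If `c` is a negative definite and `𝔥` a positive definite symmetric
bilinear form on a finite-dimensional real vector space with `𝔥 c⁻¹ 𝔥 = c`, then `𝔥 = −c`.
(Bilinear forms are identified with the linear maps `V → V*` they induce.)
-/

noncomputable section

/-- **STATEMENT 8.** -/
theorem compatible_metric_is_neg_killing
    (V : Type) [AddCommGroup V] [Module ℝ V] [FiniteDimensional ℝ V]
    (c h : V →ₗ[ℝ] Module.Dual ℝ V)
    (hc_symm : ∀ x y : V, c x y = c y x)
    (hh_symm : ∀ x y : V, h x y = h y x)
    (hc_neg : ∀ x : V, x ≠ 0 → c x x < 0)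
    (hh_pos : ∀ x : V, x ≠ 0 → 0 < h x x)
    -- `c⁻¹ : V* → V`, the inverse of the map induced by the nondegenerate form `c`:
    (cinv : Module.Dual ℝ V →ₗ[ℝ] V)
    (hcinv_left : ∀ x : V, cinv (c x) = x)
    (hcinv_right : ∀ φ : Module.Dual ℝ V, c (cinv φ) = φ)
    -- the compatibility `𝔥 c⁻¹ 𝔥 = c` as maps `V → V*`:
    (hcompat : ∀ x : V, h (cinv (h x)) = c x) :
    h = -c := by
  refine LinearMap.ext fun x => ?_
  have hy : x + cinv (h x) = 0 := by
    by_contra hne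
    have h1 := hc_neg _ hne
    have h2 := hh_pos _ hne
    have e : h (x + cinv (h x)) = c (x + cinv (h x)) := by
      rw [map_add, map_add, hcompat, hcinv_right, add_comm]
    rw [e] at h2
    exact lt_asymm h1 h2
  have h3 : c x + h x = 0 := by
    have h4 := congrArg c hy
    rwa [map_add, hcinv_right, map_zero] at h4
  rw [LinearMap.neg_apply]
  exact eq_neg_of_add_eq_zero_right h3
end
end

section
/- Let V and 𝔤 be finite-dimensional real vector spaces, c a nondegenerate symmetric bilinear form on 𝔤, and E' = V ⊕ 𝔤 ⊕ V* with the pairing ⟨(X,Φ,ξ), (Y,Φ',η)⟩ = η(X) + ξ(Y) + c(Φ,Φ'). Let 𝐆' be a positive definite symmetric bilinear form on E', written in its unique Gauss decomposition 𝐆' = Nᵀ D N with N unipotent lower block-triangular with blocks A' : V → 𝔤, B' : 𝔤 → V*, C : V → V*, and D = BlockDiag(g₀, 𝔥, h₀^{−1}) with g₀, h₀ positive definite on V and 𝔥 positive definite on 𝔤. Then 𝐆' is a generalized metric (i.e. the endomorphism τ determined by 𝐆'(ψ,ψ') = ⟨τ(ψ), ψ'⟩ satisfies τ² = 1) if and only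 if h₀ = g₀, B' = −A'ᵀ c, C = −B₀ − (1/2) A'ᵀ c A' for some antisymmetric B₀ : V → V*, and 𝔥 c^{−1} 𝔥 = c. -/
/-!
STATEMENT 9: Pointwise linear-algebra classification of generalized metrics on the
heterotic Courant algebroid fiber `E' = V ⊕ 𝔤 ⊕ V*`.
-/

noncomputable section

section

variable (V Gg : Type) [AddCommGroup V] [Module ℝ V] [AddCommGroup Gg] [Module ℝ Gg]

/-- The pairing `⟨(X,Φ,ξ), (Y,Φ',η)⟩ = η(X) + ξ(Y) + c(Φ,Φ')` on `E' = V ⊕ 𝔤 ⊕ V*`. -/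
def pairHet (c : Gg →ₗ[ℝ] Module.Dual ℝ Gg)
    (w w' : V × Gg × Module.Dual ℝ V) : ℝ :=
  w'.2.2 w.1 + w.2.2 w'.1 + c w.2.1 w'.2.1

/-- The unipotent lower block-triangular factor `N` with blocks `A' : V → 𝔤`,
`B' : 𝔤 → V*`, `C : V → V*`. -/
def gaussN (A' : V →ₗ[ℝ] Gg) (B' : Gg →ₗ[ℝ] Module.Dual ℝ V)
    (Cm : V →ₗ[ℝ] Module.Dual ℝ V)
    (w : V × Gg × Module.Dual ℝ V) : V × Gg × Module.Dual ℝ V :=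
  (w.1, A' w.1 + w.2.1, Cm w.1 + B' w.2.1 + w.2.2)

/-- The bilinear form `𝐆' = NᵀDN` with `D = BlockDiag(g₀, 𝔥, h₀⁻¹)`. -/
def gaussG (A' : V →ₗ[ℝ] Gg) (B' : Gg →ₗ[ℝ] Module.Dual ℝ V)
    (Cm : V →ₗ[ℝ] Module.Dual ℝ V)
    (g0 : V →ₗ[ℝ] Module.Dual ℝ V) (hG : Gg →ₗ[ℝ] Module.Dual ℝ Gg)
    (h0inv : Module.Dual ℝ V →ₗ[ℝ] V)
    (w w' : V × Gg × Module.Dual ℝ V) : ℝ :=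
  g0 (gaussN V Gg A' B' Cm w).1 (gaussN V Gg A' B' Cm w').1
    + hG (gaussN V Gg A' B' Cm w).2.1 (gaussN V Gg A' B' Cm w').2.1
    + (gaussN V Gg A' B' Cm w).2.2 (h0inv (gaussN V Gg A' B' Cm w').2.2)

end

/-- **STATEMENT 9.** With `𝐆' = NᵀDN` in its Gauss decomposition as above, `𝐆'` is a
generalized metric, i.e. the endomorphism `τ` determined by `𝐆'(ψ,ψ') = ⟨τ(ψ), ψ'⟩`
satisfies `τ² = 1`, if and only if `h₀ = g₀`, `B' = −A'ᵀ c`,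
`C = −B₀ − (1/2)A'ᵀ c A'` for some antisymmetric `B₀ : V → V*`, and `𝔥 c⁻¹ 𝔥 = c`. -/
theorem heterotic_generalized_metric_classification
    (V Gg : Type) [AddCommGroup V] [Module ℝ V] [FiniteDimensional ℝ V]
    [AddCommGroup Gg] [Module ℝ Gg] [FiniteDimensional ℝ Gg]
    -- the nondegenerate symmetric form `c` on `𝔤`, with its inverse:
    (c : Gg →ₗ[ℝ] Module.Dual ℝ Gg) (hc_symm : ∀ x y : Gg, c x y = c y x)
    (cinv : Module.Dual ℝ Gg →ₗ[ℝ] Gg)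
    (hcinv_left : ∀ x, cinv (c x) = x) (hcinv_right : ∀ φ, c (cinv φ) = φ)
    -- the blocks of the Gauss decomposition of `𝐆'`:
    (A' : V →ₗ[ℝ] Gg) (B' : Gg →ₗ[ℝ] Module.Dual ℝ V) (Cm : V →ₗ[ℝ] Module.Dual ℝ V)
    (g0 h0 : V →ₗ[ℝ] Module.Dual ℝ V) (hG : Gg →ₗ[ℝ] Module.Dual ℝ Gg)
    -- g₀, h₀ positive definite (symmetric) on V, 𝔥 positive definite (symmetric) on 𝔤:
    (hg0_symm : ∀ x y : V, g0 x y = g0 y x) (hg0_pos : ∀ x : V, x ≠ 0 → 0 < g0 x x)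
    (hh0_symm : ∀ x y : V, h0 x y = h0 y x) (hh0_pos : ∀ x : V, x ≠ 0 → 0 < h0 x x)
    (hhG_symm : ∀ x y : Gg, hG x y = hG y x) (hhG_pos : ∀ x : Gg, x ≠ 0 → 0 < hG x x)
    -- the inverse `h₀⁻¹` used in the block `D`:
    (h0inv : Module.Dual ℝ V →ₗ[ℝ] V)
    (hh0inv_left : ∀ x, h0inv (h0 x) = x) (hh0inv_right : ∀ φ, h0 (h0inv φ) = φ)
    -- the endomorphism τ determined by `𝐆'(ψ,ψ') = ⟨τ(ψ), ψ'⟩`: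
    (τ : (V × Gg × Module.Dual ℝ V) →ₗ[ℝ] (V × Gg × Module.Dual ℝ V))
    (hτ : ∀ w w', gaussG V Gg A' B' Cm g0 hG h0inv w w' = pairHet V Gg c (τ w) w') :
    (∀ w, τ (τ w) = w) ↔
      (h0 = g0 ∧
       (∀ (Φ : Gg) (X : V), B' Φ X = - c Φ (A' X)) ∧
       (∃ B0 : V →ₗ[ℝ] Module.Dual ℝ V, (∀ X Y : V, B0 X Y = - B0 Y X) ∧
          ∀ X Y : V, Cm X Y = - B0 X Y - (1/2 : ℝ) * c (A' X) (A' Y)) ∧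
       (∀ Φ Φ' : Gg, hG (cinv (hG Φ)) Φ' = c Φ Φ')) := by
  have h0i : ∀ (ζ η : Module.Dual ℝ V), ζ (h0inv η) = η (h0inv ζ) := by
    intro ζ η
    have h1 := hh0_symm (h0inv ζ) (h0inv η)
    rwa [hh0inv_right, hh0inv_right] at h1
  have K0 : ∀ (w : V × Gg × Module.Dual ℝ V) (Y : V) (Ψ : Gg) (η : Module.Dual ℝ V),
      g0 w.1 Y + hG (A' w.1 + w.2.1) (A' Y + Ψ)
        + (Cm Y + B' Ψ + η) (h0inv (Cm w.1 + B' w.2.1 + w.2.2))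
      = η (τ w).1 + (τ w).2.2 Y + c (τ w).2.1 Ψ := by
    intro w Y Ψ η
    have h1 := hτ w (Y, Ψ, η)
    simp only [gaussG, gaussN, pairHet] at h1
    rw [h0i] at h1
    exact h1
  have K1 : ∀ w : V × Gg × Module.Dual ℝ V,
      h0 (τ w).1 = Cm w.1 + B' w.2.1 + w.2.2 := by
    intro w
    have h2 : h0inv (Cm w.1 + B' w.2.1 + w.2.2) = (τ w).1 := by
      have h3 : ∀ Y, h0 Y (h0inv (Cm w.1 + B' w.2.1 + w.2.2)) = h0 Y (τ w).1 := by
        intro Y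
        have h1 := K0 w 0 0 (h0 Y)
        simpa using h1
      by_contra hne
      have h4 := hh0_pos _ (sub_ne_zero.mpr hne)
      rw [map_sub (h0 _), h3, sub_self] at h4
      exact lt_irrefl _ h4
    rw [← h2, hh0inv_right]
  have K1' : ∀ w : V × Gg × Module.Dual ℝ V,
      h0inv (Cm w.1 + B' w.2.1 + w.2.2) = (τ w).1 := by
    intro w
    rw [← K1, hh0inv_left]
  have K2 : ∀ (w : V × Gg × Module.Dual ℝ V) (Ψ : Gg),
      c (τ w).2.1 Ψ = hG (A' w.1 + w.2.1) Ψ + B' Ψ (τ w).1 := by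
    intro w Ψ
    have h1 := K0 w 0 Ψ 0
    rw [K1'] at h1
    simp only [map_zero, zero_add, add_zero, LinearMap.zero_apply] at h1
    exact h1.symm
  have K3 : ∀ (w : V × Gg × Module.Dual ℝ V) (Y : V),
      (τ w).2.2 Y = g0 w.1 Y + hG (A' w.1 + w.2.1) (A' Y) + Cm Y (τ w).1 := by
    intro w Y
    have h1 := K0 w Y 0 0
    rw [K1'] at h1
    simp only [map_zero, zero_add, add_zero, LinearMap.zero_apply] at h1
    exact h1.symm
  have cinj : ∀ a b : Gg, (∀ Ψ, c a Ψ = c b Ψ) → a = b := by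
    intro a b h
    rw [← hcinv_left a, ← hcinv_left b, LinearMap.ext h]
  have hinj : ∀ a b : V, (∀ Y, h0 a Y = h0 b Y) → a = b := by
    intro a b h
    rw [← hh0inv_left a, ← hh0inv_left b, LinearMap.ext h]
  constructor
  · intro hsq
    -- the vector with `N`-coordinates `(X, u, h0 Z)`
    have P : ∀ (X : V) (u : Gg) (Z : V), ∃ Q : Gg,
        (∀ Ψ, c Q Ψ = hG u Ψ + B' Ψ Z) ∧
        (∀ Y, h0 X Y = Cm Z Y + B' Q Y + g0 X Y + hG u (A' Y) + Cm Y Z) ∧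
        (∀ Ψ, c (u - A' X) Ψ = hG (A' Z + Q) Ψ + B' Ψ X) := by
      intro X u Z
      obtain ⟨w, hw⟩ : ∃ w : V × Gg × Module.Dual ℝ V,
        w = (X, u - A' X, h0 Z - Cm X - B' (u - A' X)) := ⟨_, rfl⟩
      have e1 : w.1 = X := by rw [hw]
      have e2 : w.2.1 = u - A' X := by rw [hw]
      have e3 : w.2.2 = h0 Z - Cm X - B' (u - A' X) := by rw [hw]
      have e4 : A' w.1 + w.2.1 = u := by rw [e1, e2]; abel
      have e5 : (τ w).1 = Z := by
        rw [← K1', e1, e2, e3, ← hh0inv_left Z]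
        congr 1
        rw [hh0inv_left]; abel
      refine ⟨(τ w).2.1, ?_, ?_, ?_⟩
      · intro Ψ
        rw [K2, e4, e5]
      · intro Y
        have h1 := LinearMap.congr_fun (K1 (τ w)) Y
        rw [hsq, e1, e5] at h1
        simp only [LinearMap.add_apply] at h1
        rw [h1, K3, e4, e5, e1]; ring
      · intro Ψ
        have h1 := K2 (τ w) Ψ
        rw [hsq, e1, e2, e5] at h1
        exact h1
    have hh : ∀ X Y, h0 X Y = g0 X Y := by
      intro X Y
      obtain ⟨Q, q1, q2, -⟩ := P X 0 0
      have hQ : Q = 0 := cinj _ _ (by intro Ψ; simpa using q1 Ψ)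
      simpa [hQ] using q2 Y
    have hcc : ∀ Φ Φ' : Gg, hG (cinv (hG Φ)) Φ' = c Φ Φ' := by
      intro Φ Φ'
      obtain ⟨Q, q1, -, q3⟩ := P 0 Φ 0
      have hQ : Q = cinv (hG Φ) :=
        cinj _ _ (by intro Ψ; rw [hcinv_right]; simpa using q1 Ψ)
      have := q3 Φ'
      simp [hQ] at this
      exact this.symm
    have hB : ∀ (Φ : Gg) (X : V), B' Φ X = - c Φ (A' X) := by
      intro Φ X
      obtain ⟨Q, q1, q2, -⟩ := P 0 (cinv (hG Φ)) 0
      have hQ : Q = Φ := cinj _ _ (by intro Ψ; rw [← hcc Φ]; simpa using q1 Ψ)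
      have := q2 X
      simp only [map_zero, LinearMap.zero_apply, hQ, hcc] at this
      linarith
    have hC : ∀ X Y, Cm X Y + Cm Y X = - c (A' X) (A' Y) := by
      intro X Y
      obtain ⟨Q, q1, q2, -⟩ := P 0 0 X
      have hQ : Q = - A' X := cinj _ _ (by
        intro Ψ; rw [q1, hB, hc_symm]; simp)
      have := q2 Y
      simp only [map_zero, LinearMap.zero_apply, hQ, hB, map_neg, LinearMap.neg_apply] at this
      linarith
    refine ⟨LinearMap.ext fun X => LinearMap.ext fun Y => hh X Y, hB, ?_, hcc⟩
    refine ⟨-Cm - (1/2 : ℝ) • (c.compl₁₂ A' A'), ?_, ?_⟩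
    · intro X Y
      have h1 := hC X Y
      have h2 := hc_symm (A' X) (A' Y)
      simp only [LinearMap.sub_apply, LinearMap.neg_apply, LinearMap.smul_apply,
        LinearMap.compl₁₂_apply, smul_eq_mul]
      linarith
    · intro X Y
      simp only [LinearMap.sub_apply, LinearMap.neg_apply, LinearMap.smul_apply,
        LinearMap.compl₁₂_apply, smul_eq_mul]
      ring
  · rintro ⟨rfl, hB, ⟨B0, hB0, hCB⟩, hcc⟩ w
    have hC : ∀ X Y, Cm X Y + Cm Y X = - c (A' X) (A' Y) := by
      intro X Y
      rw [hCB, hCB, hB0 Y X, hc_symm (A' Y)]; ring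
    have Q : ∀ w : V × Gg × Module.Dual ℝ V,
        (τ w).2.1 = cinv (hG (A' w.1 + w.2.1)) - A' (τ w).1 := by
      intro w
      apply cinj
      intro Ψ
      rw [K2, hB, map_sub, hcinv_right, LinearMap.sub_apply, hc_symm Ψ]; ring
    have f1 : (τ (τ w)).1 = w.1 := by
      apply hinj
      intro Y
      rw [K1, LinearMap.add_apply, LinearMap.add_apply, K3, hB, Q, map_sub, hcinv_right,
        LinearMap.sub_apply]
      have := hC (τ w).1 Y
      linarith
    have u' : A' (τ w).1 + (τ w).2.1 = cinv (hG (A' w.1 + w.2.1)) := by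
      rw [Q]; abel
    have f2 : (τ (τ w)).2.1 = w.2.1 := by
      rw [Q, f1, u', LinearMap.ext (hcc _), hcinv_left]; abel
    have f3 : (τ (τ w)).2.2 = w.2.2 := by
      ext Y
      rw [K3, u', f1, hcc, K1, LinearMap.add_apply, LinearMap.add_apply, hB, map_add,
        LinearMap.add_apply]
      have := hC w.1 Y
      linarith
    exact Prod.ext f1 (Prod.ext f2 f3)
end
end

section
/- Let (E, ρ, ⟨·,·⟩_E, [·,·]_E) be a Courant algebroid, ∇ a Courant algebroid connection with torsion operator T and Gualtieri torsion 3-form T_G(e,e',e'') = ⟨T(e,e'), e''⟩_E, and let R̃ be the tensor R̃(e,e')e'' = ∇_e∇_{e'}e'' − ∇_{e'}∇_e e'' − ∇_{[e,e']_E}e'' + ∇_{𝐋(e,e')}e'' + ⟨e', ∇_{e''}∇_{e_λ}e − ∇_{e_λ}∇_{e''}e − ∇_{[e'',e_λ]_E}e⟩_E · g_E^{−1}(e^λ), where 𝐋(e,e') = ⟨∇_{e_κ}e, e'⟩_E · g_E^{−1}(e^κ). Then R̃ satisfies the algebraic Bianchi identity: the cyclic sum over (e,e',e'') of R̃(e,e')e''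 equals the cyclic sum over (e,e',e'') of [(∇_e T_G)(e', e'', e_λ)·g_E^{−1}(e^λ) − T(e, T(e',e''))] minus (∇_{e_λ}T_G)(e,e',e'')·g_E^{−1}(e^λ). In particular, if T = 0 then R̃(e,e')e'' + R̃(e',e'')e + R̃(e'',e)e' = 0. -/
/-!
An algebraic model of Courant algebroids over a smooth manifold `M`:
`M` is modelled by its commutative `ℝ`-algebra of smooth functions `C = C^∞(M)`,
vector fields are `ℝ`-linear derivations of `C`, and the module of sections `Γ(E)`
is modelled by a `C`-module `E`.  Local frames are encoded by finite families of
sections together with duality (w.r.t. the pairing) and spanning conditions.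
-/

open scoped BigOperators

noncomputable section

variable {C : Type} [CommRing C] [Algebra ℝ C]
variable {E : Type} [AddCommGroup E] [Module C E] [Module ℝ E] [IsScalarTower ℝ C E]

variable {ι : Type} [Fintype ι] [DecidableEq ι]

/-- The covariant derivative `(∇_e T_G)(a,b,c)` of the Gualtieri torsion 3-form,
obtained by extending `∇` to the tensor algebra of `E`. -/
def covTorsionG (A : CourantAlgebroid C E) (nab : CourantConnection A)
    (F : CourantFrame A ι) (e a b c : E) : C :=
  A.anchor e (torsionG A nab F a b c)
    - torsionG A nab F (nab.cd e a) b c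
    - torsionG A nab F a (nab.cd e b) c
    - torsionG A nab F a b (nab.cd e c)

/-- The map `𝐋(e,e') = ⟨∇_{e_κ} e, e'⟩_E · g_E⁻¹(e^κ)`. -/
def Lmap (A : CourantAlgebroid C E) (nab : CourantConnection A)
    (F : CourantFrame A ι) (e e' : E) : E :=
  ∑ i, A.pairing (nab.cd (F.vec i) e) e' • F.dual i

/-- The Hohm–Zwiebach-type tensor
`R̃(e,e')e'' = ∇_e∇_{e'}e'' − ∇_{e'}∇_e e'' − ∇_{[e,e']}e'' + ∇_{𝐋(e,e')}e''
  + ⟨e', ∇_{e''}∇_{e_λ}e − ∇_{e_λ}∇_{e''}e − ∇_{[e'',e_λ]}e⟩_E · g_E⁻¹(e^λ)`. -/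
def Rtilde (A : CourantAlgebroid C E) (nab : CourantConnection A)
    (F : CourantFrame A ι) (e e' e'' : E) : E :=
  nab.cd e (nab.cd e' e'') - nab.cd e' (nab.cd e e'')
    - nab.cd (A.bracket e e') e'' + nab.cd (Lmap A nab F e e') e''
    + ∑ i, A.pairing e'
        (nab.cd e'' (nab.cd (F.vec i) e) - nab.cd (F.vec i) (nab.cd e'' e)
          - nab.cd (A.bracket e'' (F.vec i)) e) • F.dual i

namespace CABianchi

theorem p_add_right (A : CourantAlgebroid C E) (x y z : E) :
    A.pairing x (y + z) = A.pairing x y + A.pairing x z := by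
  rw [A.pairing_symm, A.pairing_add, A.pairing_symm y, A.pairing_symm z]

theorem p_smul_right (A : CourantAlgebroid C E) (f : C) (x y : E) :
    A.pairing x (f • y) = f * A.pairing x y := by
  rw [A.pairing_symm, A.pairing_smul, A.pairing_symm y]

/-- The pairing as a bilinear map. -/
def P (A : CourantAlgebroid C E) : E →ₗ[C] E →ₗ[C] C :=
  LinearMap.mk₂ C A.pairing A.pairing_add A.pairing_smul (p_add_right A) (p_smul_right A)

theorem P_apply (A : CourantAlgebroid C E) (x y : E) : A.pairing x y = P A x y := rfl

/-- The connection as linear in the first slot. -/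
def N (A : CourantAlgebroid C E) (nab : CourantConnection A) (y : E) : E →ₗ[C] E where
  toFun x := nab.cd x y
  map_add' a b := nab.add_left a b y
  map_smul' f a := nab.smul_left f a y

theorem N_apply (A : CourantAlgebroid C E) (nab : CourantConnection A) (x y : E) :
    nab.cd x y = N A nab y x := rfl

theorem frame_pair (A : CourantAlgebroid C E) (F : CourantFrame A ι) (φ : E →ₗ[C] C) (w : E) :
    A.pairing (∑ i, φ (F.vec i) • F.dual i) w = φ w := by
  conv_rhs => rw [← F.total w]
  rw [P_apply]
  simp only [map_sum, map_smul, LinearMap.sum_apply, LinearMap.smul_apply, smul_eq_mul]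
  refine Finset.sum_congr rfl fun i _ => ?_
  rw [mul_comm]; rfl

theorem frame_pair' (A : CourantAlgebroid C E) (F : CourantFrame A ι) (φ : E → C)
    (h1 : ∀ x y, φ (x + y) = φ x + φ y) (h2 : ∀ (f : C) x, φ (f • x) = f * φ x) (w : E) :
    A.pairing (∑ i, φ (F.vec i) • F.dual i) w = φ w :=
  frame_pair A F { toFun := φ, map_add' := h1, map_smul' := h2 } w

theorem p_sub_left (A : CourantAlgebroid C E) (x y z : E) :
    A.pairing (x - y) z = A.pairing x z - A.pairing y z := by simp [P_apply]
theorem p_sub_right (A : CourantAlgebroid C E) (x y z : E) :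
    A.pairing x (y - z) = A.pairing x y - A.pairing x z := by simp [P_apply]

theorem pL (A : CourantAlgebroid C E) (nab : CourantConnection A) (F : CourantFrame A ι)
    (x y w : E) : A.pairing (Lmap A nab F x y) w = A.pairing (nab.cd w x) y := by
  unfold Lmap
  refine frame_pair' A F (fun w => A.pairing (nab.cd w x) y) ?_ ?_ w
  · intro u v; simp only [nab.add_left, A.pairing_add]
  · intro f u; simp only [nab.smul_left, A.pairing_smul]

theorem T_eq (A : CourantAlgebroid C E) (nab : CourantConnection A) (F : CourantFrame A ι)
    (x y : E) : torsionOp A nab F x y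
      = nab.cd x y - nab.cd y x - A.bracket x y + Lmap A nab F x y := rfl

theorem pT (A : CourantAlgebroid C E) (nab : CourantConnection A) (F : CourantFrame A ι)
    (x y w : E) : A.pairing (torsionOp A nab F x y) w
      = A.pairing (nab.cd x y) w - A.pairing (nab.cd y x) w - A.pairing (A.bracket x y) w
        + A.pairing (nab.cd w x) y := by
  rw [T_eq, A.pairing_add, p_sub_left, p_sub_left, pL]

/-- polarized symmetric axiom -/
theorem polar (A : CourantAlgebroid C E) (x y w : E) :
    A.pairing (A.bracket x y) w + A.pairing (A.bracket y x) w
      = A.anchor w (A.pairing x y) := by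
  have h := A.ax_symmetric (x + y) w
  have h1 := A.ax_symmetric x w
  have h2 := A.ax_symmetric y w
  simp only [A.add_left, A.add_right, A.pairing_add, p_add_right, map_add, smul_add, h1, h2,
    A.pairing_symm y x] at h
  have h3 : (2:ℝ)⁻¹ • A.anchor w (A.pairing x y) + (2:ℝ)⁻¹ • A.anchor w (A.pairing x y)
      = A.anchor w (A.pairing x y) := by
    rw [← add_smul]; norm_num
  linear_combination h + h3

theorem anchor_bracket_smul (A : CourantAlgebroid C E) (x y z : E) (f : C) :
    (A.anchor (A.bracket x y) f - (A.anchor x (A.anchor y f) - A.anchor y (A.anchor x f))) • z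
      = 0 := by
  have h := A.leibniz_identity x y (f • z)
  simp only [A.leibniz_rule, A.add_right, A.leibniz_identity x y z, smul_add] at h
  rw [sub_smul, sub_smul]
  rw [← sub_eq_zero] at h
  rw [← neg_eq_zero, ← h]
  abel

/-- Functoriality of the anchor. -/
theorem anchor_bracket (A : CourantAlgebroid C E) (F : CourantFrame A ι) [Nonempty ι]
    (x y : E) (f : C) :
    A.anchor (A.bracket x y) f = A.anchor x (A.anchor y f) - A.anchor y (A.anchor x f) := by
  obtain ⟨i⟩ := ‹Nonempty ι›
  have h := congrArg (A.pairing (F.dual i)) (anchor_bracket_smul A x y (F.vec i) f)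
  rw [p_smul_right, F.dual_pair, if_pos rfl, mul_one] at h
  have h0 : A.pairing (F.dual i) 0 = 0 := by rw [P_apply, map_zero]
  rw [h0] at h
  exact sub_eq_zero.mp h

theorem cov_sum1 (A : CourantAlgebroid C E) (nab : CourantConnection A) (F : CourantFrame A ι)
    (x y z w : E) :
    A.pairing (∑ i, covTorsionG A nab F x y z (F.vec i) • F.dual i) w
      = covTorsionG A nab F x y z w := by
  refine frame_pair' A F (fun w => covTorsionG A nab F x y z w) ?_ ?_ w
  · intro u v
    simp only [covTorsionG, torsionG, nab.add_right, p_add_right, map_add]; ring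
  · intro f u
    simp only [covTorsionG, torsionG, nab.smul_right, p_add_right, p_smul_right,
      Derivation.leibniz, smul_eq_mul]; ring

theorem T_add_left (A : CourantAlgebroid C E) (nab : CourantConnection A) (F : CourantFrame A ι)
    (x y z w : E) : torsionG A nab F (x + y) z w = torsionG A nab F x z w + torsionG A nab F y z w := by
  simp only [torsionG, pT, nab.add_left, nab.add_right, A.add_left, A.pairing_add]; ring

theorem T_add_right (A : CourantAlgebroid C E) (nab : CourantConnection A) (F : CourantFrame A ι)
    (x y z w : E) : torsionG A nab F z (x + y) w = torsionG A nab F z x w + torsionG A nab F z y w := by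
  simp only [torsionG, pT, nab.add_left, nab.add_right, A.add_right, A.pairing_add, p_add_right]
  ring

theorem br_smul_left (A : CourantAlgebroid C E) (f : C) (x y w : E) :
    A.pairing (A.bracket (f • x) y) w = f * A.pairing (A.bracket x y) w
      - A.anchor y f * A.pairing x w + A.anchor w f * A.pairing x y := by
  have h1 := polar A (f • x) y w
  have h2 := polar A x y w
  simp only [A.leibniz_rule, A.pairing_add, A.pairing_smul, Derivation.leibniz, smul_eq_mul] at h1
  linear_combination h1 - f * h2

theorem T_smul_left (A : CourantAlgebroid C E) (nab : CourantConnection A) (F : CourantFrame A ι)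
    (f : C) (x z w : E) : torsionG A nab F (f • x) z w = f * torsionG A nab F x z w := by
  simp only [torsionG, pT, nab.smul_left, nab.smul_right, br_smul_left, A.pairing_add,
    A.pairing_smul]; ring

theorem T_smul_right (A : CourantAlgebroid C E) (nab : CourantConnection A) (F : CourantFrame A ι)
    (f : C) (x z w : E) : torsionG A nab F z (f • x) w = f * torsionG A nab F z x w := by
  simp only [torsionG, pT, nab.smul_left, nab.smul_right, A.leibniz_rule, A.pairing_add,
    A.pairing_smul, p_smul_right]; ring

theorem cov_sum2 (A : CourantAlgebroid C E) (nab : CourantConnection A) (F : CourantFrame A ι)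
    (x y z w : E) :
    A.pairing (∑ i, covTorsionG A nab F (F.vec i) x y z • F.dual i) w
      = covTorsionG A nab F w x y z := by
  refine frame_pair' A F (fun w => covTorsionG A nab F w x y z) ?_ ?_ w
  · intro u v
    simp only [covTorsionG, T_add_left, T_add_right, nab.add_left, map_add, Derivation.add_apply]
    simp only [torsionG, p_add_right]; ring
  · intro f u
    simp only [covTorsionG, T_smul_left, T_smul_right, nab.smul_left, map_smul,
      Derivation.smul_apply, smul_eq_mul]
    simp only [torsionG, p_smul_right]; ring

theorem pR (A : CourantAlgebroid C E) (nab : CourantConnection A) (F : CourantFrame A ι)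
    (x y z w : E) :
    A.pairing (Rtilde A nab F x y z) w =
      A.pairing (nab.cd x (nab.cd y z)) w - A.pairing (nab.cd y (nab.cd x z)) w
      - A.pairing (nab.cd (A.bracket x y) z) w + A.pairing (nab.cd (Lmap A nab F x y) z) w
      + (A.pairing y (nab.cd z (nab.cd w x)) - A.pairing y (nab.cd w (nab.cd z x))
          - A.pairing y (nab.cd (A.bracket z w) x)) := by
  unfold Rtilde
  rw [A.pairing_add, A.pairing_add, p_sub_left, p_sub_left]
  congr 1
  rw [← p_sub_right, ← p_sub_right]
  refine frame_pair' A F (fun w => A.pairing y (nab.cd z (nab.cd w x) - nab.cd w (nab.cd z x)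
          - nab.cd (A.bracket z w) x)) ?_ ?_ w
  · intro u v
    simp only [nab.add_left, nab.add_right, A.add_right, p_add_right, p_sub_right]; ring
  · intro f u
    simp only [nab.smul_left, nab.smul_right, A.leibniz_rule, nab.add_left, p_add_right,
      p_sub_right, p_smul_right]; ring

theorem cd_sub_left (A : CourantAlgebroid C E) (nab : CourantConnection A) (x y z : E) :
    nab.cd (x - y) z = nab.cd x z - nab.cd y z := by simp [N_apply]

/-- bracket with second argument expanded -/
theorem brX (A : CourantAlgebroid C E) (a x w : E) :
    A.pairing (A.bracket a x) w = A.anchor a (A.pairing x w) - A.pairing x (A.bracket a w) := by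
  linear_combination - A.ax_invariance a x w

theorem brX' (A : CourantAlgebroid C E) (a x w : E) :
    A.pairing (A.bracket x a) w = A.anchor w (A.pairing x a)
      - A.anchor a (A.pairing x w) + A.pairing x (A.bracket a w) := by
  linear_combination polar A x a w - brX A a x w

theorem TT (A : CourantAlgebroid C E) (nab : CourantConnection A) (F : CourantFrame A ι)
    (a b c w : E) :
    covTorsionG A nab F a b c w - A.pairing (torsionOp A nab F a (torsionOp A nab F b c)) w
     = - torsionG A nab F (nab.cd a b) c w - torsionG A nab F b (nab.cd a c) w
       + A.pairing (nab.cd (torsionOp A nab F b c) a) w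
       + (A.anchor a (torsionG A nab F b c w) - torsionG A nab F b c (A.bracket a w))
       - torsionG A nab F b c (nab.cd w a) := by
  rw [pT A nab F a]
  simp only [covTorsionG, torsionG]
  rw [brX A a (torsionOp A nab F b c) w, nab.pairing_compat a (torsionOp A nab F b c) w,
    A.pairing_symm (nab.cd w a)]
  ring

theorem jac (A : CourantAlgebroid C E) (F : CourantFrame A ι) [Nonempty ι] (a b c w : E) :
    A.pairing (A.bracket a (A.bracket b c)) w + A.pairing (A.bracket b (A.bracket c a)) w
      + A.pairing (A.bracket c (A.bracket a b)) w
      = A.anchor w (A.anchor b (A.pairing a c)) + A.anchor w (A.pairing c (A.bracket a b)) := by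
  have h1 := polar A c (A.bracket a b) w
  have h2 := congrArg (fun x => A.pairing x w) (A.leibniz_identity a b c)
  simp only [A.pairing_add] at h2
  have h3 := brX A b (A.bracket a c) w
  have h4 := brX A b (A.bracket c a) w
  have h5 := congrArg (A.anchor b) (polar A a c w)
  have h6 := polar A a c (A.bracket b w)
  rw [anchor_bracket A F] at h6
  rw [map_add] at h5
  linear_combination h1 + h2 + h3 + h4 + h5 - h6

theorem main (A : CourantAlgebroid C E) (nab : CourantConnection A) (F : CourantFrame A ι)
    [Nonempty ι] (a b c w : E) :
    A.pairing (Rtilde A nab F a b c) w + A.pairing (Rtilde A nab F b c a) w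
      + A.pairing (Rtilde A nab F c a b) w
    = (covTorsionG A nab F a b c w - A.pairing (torsionOp A nab F a (torsionOp A nab F b c)) w)
      + (covTorsionG A nab F b c a w - A.pairing (torsionOp A nab F b (torsionOp A nab F c a)) w)
      + (covTorsionG A nab F c a b w - A.pairing (torsionOp A nab F c (torsionOp A nab F a b)) w)
      - covTorsionG A nab F w a b c := by
  have hj := jac A F a b c w
  rw [brX A a (A.bracket b c), brX A b (A.bracket c a), brX A c (A.bracket a b)] at hj
  rw [TT, TT, TT]
  simp only [pR, covTorsionG, torsionG]
  simp only [T_eq A nab F, nab.add_left, cd_sub_left, A.pairing_add, p_sub_left, pL, map_add,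
    map_sub]
  -- brackets with derivative arguments
  simp only [brX A _ (nab.cd _ _), brX' A _ (nab.cd _ _)]
  simp only [nab.pairing_compat _ (nab.cd _ _) _]
  have hk := congrArg (A.anchor w) (nab.pairing_compat b a c)
  rw [map_add, nab.pairing_compat w (nab.cd b a) c, nab.pairing_compat w a (nab.cd b c)] at hk
  have ps := A.pairing_symm
  have hp := polar A a c (nab.cd w b)
  have hq := nab.pairing_compat (nab.cd w b) a c
  rw [hq] at hp
  simp only [ps] at hj hk hp ⊢
  have cancel : ∀ x y : C, x - y = 0 → x = y := fun x y h => sub_eq_zero.mp h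
  apply cancel
  linear_combination hj + hk - hp

end CABianchi

/-- **STATEMENT 14.** The algebraic Bianchi identity for `R̃`: the cyclic sum over
`(e,e',e'')` of `R̃(e,e')e''` equals the cyclic sum of
`(∇_e T_G)(e',e'',e_λ)·g_E⁻¹(e^λ) − T(e, T(e',e''))` minus
`(∇_{e_λ} T_G)(e,e',e'')·g_E⁻¹(e^λ)`.  In particular if `T = 0` then the cyclic sum
of `R̃` vanishes. -/
theorem Rtilde_algebraic_Bianchi
    (C : Type) [CommRing C] [Algebra ℝ C]
    (E : Type) [AddCommGroup E] [Module C E] [Module ℝ E] [IsScalarTower ℝ C E]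
    (A : CourantAlgebroid C E) (nab : CourantConnection A)
    (ι : Type) [Fintype ι] [DecidableEq ι] (F : CourantFrame A ι) :
    (∀ e e' e'' : E,
      Rtilde A nab F e e' e'' + Rtilde A nab F e' e'' e + Rtilde A nab F e'' e e'
        = ((∑ i, covTorsionG A nab F e e' e'' (F.vec i) • F.dual i
              - torsionOp A nab F e (torsionOp A nab F e' e''))
          + (∑ i, covTorsionG A nab F e' e'' e (F.vec i) • F.dual i
              - torsionOp A nab F e' (torsionOp A nab F e'' e))
          + (∑ i, covTorsionG A nab F e'' e e' (F.vec i) • F.dual i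
              - torsionOp A nab F e'' (torsionOp A nab F e e')))
          - ∑ i, covTorsionG A nab F (F.vec i) e e' e'' • F.dual i) ∧
    ((∀ e e', torsionOp A nab F e e' = 0) →
      ∀ e e' e'' : E,
        Rtilde A nab F e e' e'' + Rtilde A nab F e' e'' e + Rtilde A nab F e'' e e' = 0) := by
  have key : ∀ e e' e'' : E,
      Rtilde A nab F e e' e'' + Rtilde A nab F e' e'' e + Rtilde A nab F e'' e e'
        = ((∑ i, covTorsionG A nab F e e' e'' (F.vec i) • F.dual i
              - torsionOp A nab F e (torsionOp A nab F e' e''))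
          + (∑ i, covTorsionG A nab F e' e'' e (F.vec i) • F.dual i
              - torsionOp A nab F e' (torsionOp A nab F e'' e))
          + (∑ i, covTorsionG A nab F e'' e e' (F.vec i) • F.dual i
              - torsionOp A nab F e'' (torsionOp A nab F e e')))
          - ∑ i, covTorsionG A nab F (F.vec i) e e' e'' • F.dual i := by
    intro a b c
    rcases isEmpty_or_nonempty ι with hι | hι
    · have hz : ∀ x : E, x = 0 := fun x => by rw [← F.total x]; simp
      rw [hz (Rtilde A nab F a b c + Rtilde A nab F b c a + Rtilde A nab F c a b)]
      exact (hz _).symm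
    · rw [← sub_eq_zero]
      refine A.pairing_nondeg _ fun w => ?_
      simp only [CABianchi.p_sub_left, A.pairing_add, CABianchi.cov_sum1, CABianchi.cov_sum2]
      linear_combination CABianchi.main A nab F a b c w
  refine ⟨key, fun hT a b c => ?_⟩
  rw [key a b c]
  have h0 : ∀ x : E, A.pairing 0 x = 0 := fun x => by simp [CABianchi.P_apply]
  simp [covTorsionG, torsionG, hT, h0]
end
end

section
/- Let V be a finite-dimensional real vector space, g a positive definite symmetric bilinear form on V, and B an invertible antisymmetric bilinear form on V, both viewed as linear maps V → V*. Set θ = B^{−1} : V* → V, G = −B g^{−1} B and Φ = −B. Then g+B and G+Φ are invertible, G is symmetric positive definite, Φ is antisymmetric, and the open-closed relation (g+B)^{−1} = (G+Φ)^{−1} + θ holds; moreover (G, Φ) is the unique pair of a symmetric invertible form and an antisymmetric form satisfying this relation. -/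
/-!
STATEMENT 15: The background-independent gauge solution of the Seiberg–Witten
open-closed relations.  All bilinear forms are identified with the induced linear
maps `V → V*`.
-/

noncomputable section

/-- **STATEMENT 15.** For `g` positive definite symmetric and `B` invertible
antisymmetric (as maps `V → V*`), put `θ = B⁻¹`, `G = −B g⁻¹ B`, `Φ = −B`.  Then
`g+B` and `G+Φ` are invertible, `G` is symmetric positive definite, `Φ` is
antisymmetric, the open-closed relation `(g+B)⁻¹ = (G+Φ)⁻¹ + θ` holds, and `(G,Φ)`
is the unique such pair. -/
theorem background_independent_gauge
    (V : Type) [AddCommGroup V] [Module ℝ V] [FiniteDimensional ℝ V]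
    (g B : V →ₗ[ℝ] Module.Dual ℝ V)
    (hg_symm : ∀ x y : V, g x y = g y x)
    (hg_pos : ∀ x : V, x ≠ 0 → 0 < g x x)
    (hB_skew : ∀ x y : V, B x y = - B y x)
    -- `g⁻¹`:
    (gi : Module.Dual ℝ V →ₗ[ℝ] V)
    (hgi_left : ∀ x, gi (g x) = x) (hgi_right : ∀ φ, g (gi φ) = φ)
    -- `θ = B⁻¹`:
    (θ : Module.Dual ℝ V →ₗ[ℝ] V)
    (hθ_left : ∀ x, θ (B x) = x) (hθ_right : ∀ φ, B (θ φ) = φ) :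
    -- `G = −B g⁻¹ B` is symmetric positive definite:
    (∀ x y : V, (-(B ∘ₗ gi ∘ₗ B)) x y = (-(B ∘ₗ gi ∘ₗ B)) y x) ∧
    (∀ x : V, x ≠ 0 → 0 < (-(B ∘ₗ gi ∘ₗ B)) x x) ∧
    -- `Φ = −B` is antisymmetric:
    (∀ x y : V, (-B) x y = - (-B) y x) ∧
    -- `g+B` and `G+Φ` are invertible and the open-closed relation
    -- `(g+B)⁻¹ = (G+Φ)⁻¹ + θ` holds:
    (∃ P Q : Module.Dual ℝ V →ₗ[ℝ] V,
      P ∘ₗ (g + B) = LinearMap.id ∧ (g + B) ∘ₗ P = LinearMap.id ∧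
      Q ∘ₗ ((-(B ∘ₗ gi ∘ₗ B)) + (-B)) = LinearMap.id ∧
      ((-(B ∘ₗ gi ∘ₗ B)) + (-B)) ∘ₗ Q = LinearMap.id ∧
      P = Q + θ) ∧
    -- uniqueness of `(G, Φ)`:
    (∀ (G' Φ' : V →ₗ[ℝ] Module.Dual ℝ V)
        (P Q' : Module.Dual ℝ V →ₗ[ℝ] V),
      (∀ x y : V, G' x y = G' y x) → Function.Bijective G' →
      (∀ x y : V, Φ' x y = - Φ' y x) →
      Q' ∘ₗ (G' + Φ') = LinearMap.id → (G' + Φ') ∘ₗ Q' = LinearMap.id →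
      P ∘ₗ (g + B) = LinearMap.id → (g + B) ∘ₗ P = LinearMap.id →
      P = Q' + θ →
      G' = -(B ∘ₗ gi ∘ₗ B) ∧ Φ' = -B) := by
  have hBxx : ∀ x, B x x = 0 := fun x => by linarith [hB_skew x x]
  have hG : ∀ x y : V, (-(B ∘ₗ gi ∘ₗ B)) x y = g (gi (B x)) (gi (B y)) := by
    intro x y
    rw [hg_symm, hgi_right, hB_skew y]
    simp
  have hGs : ∀ x y : V, (-(B ∘ₗ gi ∘ₗ B)) x y = (-(B ∘ₗ gi ∘ₗ B)) y x := by
    intro x y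
    rw [hG, hG, hg_symm]
  have key : ∀ P : Module.Dual ℝ V →ₗ[ℝ] V, (∀ x, P (g x + B x) = x) →
      ∀ x, P (-(B (gi (B x))) + -(B x)) - θ (-(B (gi (B x))) + -(B x)) = x := by
    intro P hP x
    have h1 := hP (gi (B x) + x)
    have h2 := hP x
    simp only [map_add, map_neg, hgi_right, hθ_left] at h1 h2 ⊢
    have h3 : P (B (gi (B x))) + P (B x) = gi (B x) := by
      have h4 : P (g x) + P (B x) + (P (B (gi (B x))) + P (B x)) = x + gi (B x) := by
        rw [add_comm x, ← h1]; abel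
      rw [h2] at h4
      exact add_left_cancel h4
    have h5 : -P (B (gi (B x))) + -P (B x) = -gi (B x) := by rw [← neg_add, h3]
    rw [h5]; abel
  refine ⟨hGs, ?_, ?_, ?_, ?_⟩
  · intro x hx
    rw [hG]
    apply hg_pos
    intro h
    apply hx
    rw [← hθ_left x, ← hgi_right (B x), h]
    simp
  · intro x y
    simp only [LinearMap.neg_apply]
    rw [hB_skew]
  · have hinj : Function.Injective (g + B) := by
      rw [injective_iff_map_eq_zero]
      intro x hx
      by_contra hne
      have h1 := hg_pos x hne
      have h2 : (g + B) x x = 0 := by rw [hx]; rfl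
      simp only [LinearMap.add_apply, hBxx] at h2
      linarith
    let e := LinearMap.linearEquivOfInjective (g + B) hinj Subspace.dual_finrank_eq.symm
    have he : ∀ x, e x = g x + B x := fun x => rfl
    have hl : ∀ x, e.symm (g x + B x) = x := fun x => by
      rw [← he, e.symm_apply_apply]
    have hr : ∀ φ, g (e.symm φ) + B (e.symm φ) = φ := fun φ => by
      rw [← he, e.apply_symm_apply]
    refine ⟨e.symm.toLinearMap, e.symm.toLinearMap - θ, ?_, ?_, ?_, ?_, ?_⟩
    · ext1 x
      exact hl x
    · apply LinearMap.ext
      intro φ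
      exact hr φ
    · ext1 x
      exact key e.symm.toLinearMap hl x
    · apply LinearMap.ext
      intro φ
      have h1 := hr φ
      have h2 : B (gi (B (e.symm φ))) = B (gi φ) - B (e.symm φ) := by
        rw [← hgi_left (e.symm φ), ← map_sub, ← map_sub, hgi_left]
        congr 2
        exact eq_sub_of_add_eq' h1
      change -(B (gi (B (e.symm φ - θ φ)))) + -(B (e.symm φ - θ φ)) = φ
      simp only [map_sub, hθ_right, h2]
      abel
    · simp
  · intro G' Φ' P Q' hGs' _ hΦ hQ1 hQ2 hP1 hP2 hPQ
    have hM : ∀ x, G' x + Φ' x = -(B (gi (B x))) + -(B x) := by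
      intro x
      have h := key P (fun x => LinearMap.congr_fun hP1 x) x
      rw [hPQ, LinearMap.add_apply, add_sub_cancel_right] at h
      have h2 := LinearMap.congr_fun hQ2 (-(B (gi (B x))) + -(B x))
      rw [LinearMap.comp_apply, h] at h2
      exact h2
    have hM2 : ∀ x y, G' x y + Φ' x y = (-(B ∘ₗ gi ∘ₗ B)) x y - B x y := by
      intro x y
      have := LinearMap.congr_fun (hM x) y
      simpa [sub_eq_add_neg] using this
    constructor
    · apply LinearMap.ext; intro x
      apply LinearMap.ext; intro y
      linarith [hM2 x y, hM2 y x, hGs x y, hGs' x y, hΦ x y, hB_skew x y]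
    · apply LinearMap.ext; intro x
      apply LinearMap.ext; intro y
      have : (-B) x y = - B x y := rfl
      linarith [hM2 x y, hM2 y x, hGs x y, hGs' x y, hΦ x y, hB_skew x y]
end
end
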